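/- Let c_1, …, c_8 ∈ ℂ^{16 × 16} be Majorana operators (n = 4), let a_k = (c_{2k−1} + i c_{2k})/2 and n_k = a_k† a_k, and let H = −(1/2)·Σ_{i=1}^{3}(a_i† a_{i+1} + a_{i+1}† a_i) + Σ_{i=1}^{3}(1/4 − n_i n_{i+1}) + (1/2)(n_1 − 1/2) + (n_2 − 1/2) + (n_3 − 1/2) + (1/2)(n_4 − 1/2). Let ψ ∈ ℂ^{16} be any unit eigenvector of H for its largest eigenvalue λ_max(H) = (3 + 2√3)/4, and let Γ ∈ ℝ^{8 × 8} be its covariance matrix, Γ_{jk} = (i/2)·ψ† [c_j, c_k] ψ. Then Γ Γᵀ = s·1 with s = (5 + 2√3)/9. In particular, since s < 1, ψ is not a fermionic Gaussian state. -/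

import Mathlib

open Matrix
open scoped ComplexOrder

noncomputable section

/-- A family of `2n` Majorana operators on `ℂ^(2^n)`. -/
def IsMajorana (n : ℕ) (c : Fin (2*n) → Matrix (Fin (2^n)) (Fin (2^n)) ℂ) : Prop :=
  (∀ j, (c j).IsHermitian) ∧
  ∀ j k, c j * c k + c k * c j =
    if j = k then (2 : ℂ) • (1 : Matrix (Fin (2^n)) (Fin (2^n)) ℂ) else 0

/-- The first Majorana operator of mode `j` (i.e. `c_{2j-1}` in 1-based indexing). -/
def majA (n : ℕ) (c : Fin (2*n) → Matrix (Fin (2^n)) (Fin (2^n)) ℂ) (j : Fin n) :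
    Matrix (Fin (2^n)) (Fin (2^n)) ℂ :=
  c ⟨2*j, by have := j.isLt; omega⟩

/-- The second Majorana operator of mode `j` (i.e. `c_{2j}` in 1-based indexing). -/
def majB (n : ℕ) (c : Fin (2*n) → Matrix (Fin (2^n)) (Fin (2^n)) ℂ) (j : Fin n) :
    Matrix (Fin (2^n)) (Fin (2^n)) ℂ :=
  c ⟨2*j+1, by have := j.isLt; omega⟩

/-- Annihilation operator `a_j = (c_{2j-1} + i c_{2j})/2`. -/
def ann (n : ℕ) (c : Fin (2*n) → Matrix (Fin (2^n)) (Fin (2^n)) ℂ) (j : Fin n) :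
    Matrix (Fin (2^n)) (Fin (2^n)) ℂ :=
  ((1:ℂ)/2) • (majA n c j + Complex.I • majB n c j)

/-- Number operator `n_j = a_j† a_j`. -/
def num (n : ℕ) (c : Fin (2*n) → Matrix (Fin (2^n)) (Fin (2^n)) ℂ) (j : Fin n) :
    Matrix (Fin (2^n)) (Fin (2^n)) ℂ :=
  (ann n c j)ᴴ * ann n c j

/-- The fermionic Gaussian state `2^{-n} ∏_j (1 + i λ_j c̃_{2j-1} c̃_{2j})`,
where `c̃_i = Σ_k R_{ik} c_k`. -/
def gaussOf (n : ℕ) (c : Fin (2*n) → Matrix (Fin (2^n)) (Fin (2^n)) ℂ)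
    (lam : Fin n → ℝ) (R : Matrix (Fin (2*n)) (Fin (2*n)) ℝ) :
    Matrix (Fin (2^n)) (Fin (2^n)) ℂ :=
  ((2:ℂ)^n)⁻¹ •
    ((List.finRange n).map (fun j =>
      (1 : Matrix (Fin (2^n)) (Fin (2^n)) ℂ) +
        (Complex.I * (lam j : ℂ)) •
          ((∑ k, ((R ⟨2*j, by have := j.isLt; omega⟩ k : ℝ) : ℂ) • c k) *
           (∑ k, ((R ⟨2*j+1, by have := j.isLt; omega⟩ k : ℝ) : ℂ) • c k)))).prod

/-- A (generally mixed) fermionic Gaussian state. -/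
def IsGaussianState (n : ℕ) (c : Fin (2*n) → Matrix (Fin (2^n)) (Fin (2^n)) ℂ)
    (ρ : Matrix (Fin (2^n)) (Fin (2^n)) ℂ) : Prop :=
  ∃ (lam : Fin n → ℝ) (R : Matrix (Fin (2*n)) (Fin (2*n)) ℝ),
    (∀ j, lam j ∈ Set.Icc (-1:ℝ) 1) ∧ R * Rᵀ = 1 ∧ R.det = 1 ∧ ρ = gaussOf n c lam R

/-- A pure fermionic Gaussian state: all `λ_j = ±1`. -/
def IsPureGaussianState (n : ℕ) (c : Fin (2*n) → Matrix (Fin (2^n)) (Fin (2^n)) ℂ)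
    (ρ : Matrix (Fin (2^n)) (Fin (2^n)) ℂ) : Prop :=
  ∃ (lam : Fin n → ℝ) (R : Matrix (Fin (2*n)) (Fin (2*n)) ℝ),
    (∀ j, lam j = 1 ∨ lam j = -1) ∧ R * Rᵀ = 1 ∧ R.det = 1 ∧ ρ = gaussOf n c lam R

/-- The largest (real) eigenvalue of a Hermitian matrix. -/
def lamMax {m : Type} [Fintype m] [DecidableEq m] (M : Matrix m m ℂ) : ℝ :=
  sSup {x : ℝ | (x : ℂ) ∈ spectrum ℂ M}

section Fock

set_option linter.unusedSimpArgs false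
set_option linter.unusedVariables false

/-- Fock basis vectors built from a vacuum vector. -/
def fockVec {V : Type*} [AddCommGroup V] [Module ℂ V] (A : Fin 4 → V →ₗ[ℂ] V) (Ω : V) :
    Fin 16 → V :=
  ![Ω,
    A 0 Ω,
    A 1 Ω,
    A 0 (A 1 Ω),
    A 2 Ω,
    A 0 (A 2 Ω),
    A 1 (A 2 Ω),
    A 0 (A 1 (A 2 Ω)),
    A 3 Ω,
    A 0 (A 3 Ω),
    A 1 (A 3 Ω),
    A 0 (A 1 (A 3 Ω)),
    A 2 (A 3 Ω),
    A 0 (A 2 (A 3 Ω)),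
    A 1 (A 2 (A 3 Ω)),
    A 0 (A 1 (A 2 (A 3 Ω)))]

/-- Annihilation operators in Fock coordinates. -/
def lowC (v : Fin 16 → ℂ) : Fin 4 → Fin 16 → ℂ :=
  ![![v 1, 0, v 3, 0, v 5, 0, v 7, 0, v 9, 0, v 11, 0, v 13, 0, v 15, 0],
    ![v 2, -v 3, 0, 0, v 6, -v 7, 0, 0, v 10, -v 11, 0, 0, v 14, -v 15, 0, 0],
    ![v 4, -v 5, -v 6, v 7, 0, 0, 0, 0, v 12, -v 13, -v 14, v 15, 0, 0, 0, 0],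
    ![v 8, -v 9, -v 10, v 11, -v 12, v 13, v 14, -v 15, 0, 0, 0, 0, 0, 0, 0, 0]]

/-- Creation operators in Fock coordinates. -/
def raiseC (v : Fin 16 → ℂ) : Fin 4 → Fin 16 → ℂ :=
  ![![0, v 0, 0, v 2, 0, v 4, 0, v 6, 0, v 8, 0, v 10, 0, v 12, 0, v 14],
    ![0, 0, v 0, -v 1, 0, 0, v 4, -v 5, 0, 0, v 8, -v 9, 0, 0, v 12, -v 13],
    ![0, 0, 0, 0, v 0, -v 1, -v 2, v 3, 0, 0, 0, 0, v 8, -v 9, -v 10, v 11],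
    ![0, 0, 0, 0, 0, 0, 0, 0, v 0, -v 1, -v 2, v 3, -v 4, v 5, v 6, -v 7]]

set_option maxHeartbeats 4000000 in
lemma fock_low {V : Type*} [AddCommGroup V] [Module ℂ V] (a A : Fin 4 → V →ₗ[ℂ] V) (Ω : V)
    (hAA : ∀ i j v, A i (A j v) = -A j (A i v))
    (haA : ∀ i j, i ≠ j → ∀ v, a i (A j v) = -A j (a i v))
    (haa : ∀ i v, a i (A i v) = v - A i (a i v))
    (hΩ : ∀ i, a i Ω = 0)
    (j : Fin 4) (v : Fin 16 → ℂ) :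
    a j (∑ t, v t • fockVec A Ω t) = ∑ t, lowC v j t • fockVec A Ω t := by
  have hA : ∀ i v, A i (A i v) = 0 := by
    intro i v
    have h := hAA i i v
    have h2 : (2 : ℂ) • A i (A i v) = 0 := by rw [two_smul]; nth_rewrite 1 [h]; simp
    exact (smul_eq_zero.mp h2).resolve_left two_ne_zero
  have r00 (v : V) : A 0 (A 0 v) = 0 := hA 0 v
  have r10 (v : V) : A 1 (A 0 v) = -A 0 (A 1 v) := hAA 1 0 v
  have r11 (v : V) : A 1 (A 1 v) = 0 := hA 1 v
  have r20 (v : V) : A 2 (A 0 v) = -A 0 (A 2 v) := hAA 2 0 v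
  have r21 (v : V) : A 2 (A 1 v) = -A 1 (A 2 v) := hAA 2 1 v
  have r22 (v : V) : A 2 (A 2 v) = 0 := hA 2 v
  have r30 (v : V) : A 3 (A 0 v) = -A 0 (A 3 v) := hAA 3 0 v
  have r31 (v : V) : A 3 (A 1 v) = -A 1 (A 3 v) := hAA 3 1 v
  have r32 (v : V) : A 3 (A 2 v) = -A 2 (A 3 v) := hAA 3 2 v
  have r33 (v : V) : A 3 (A 3 v) = 0 := hA 3 v
  have s01 (v : V) : a 0 (A 1 v) = -A 1 (a 0 v) := haA 0 1 (by decide) v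
  have s02 (v : V) : a 0 (A 2 v) = -A 2 (a 0 v) := haA 0 2 (by decide) v
  have s03 (v : V) : a 0 (A 3 v) = -A 3 (a 0 v) := haA 0 3 (by decide) v
  have s00 (v : V) : a 0 (A 0 v) = v - A 0 (a 0 v) := haa 0 v
  have s10 (v : V) : a 1 (A 0 v) = -A 0 (a 1 v) := haA 1 0 (by decide) v
  have s12 (v : V) : a 1 (A 2 v) = -A 2 (a 1 v) := haA 1 2 (by decide) v
  have s13 (v : V) : a 1 (A 3 v) = -A 3 (a 1 v) := haA 1 3 (by decide) v
  have s11 (v : V) : a 1 (A 1 v) = v - A 1 (a 1 v) := haa 1 v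
  have s20 (v : V) : a 2 (A 0 v) = -A 0 (a 2 v) := haA 2 0 (by decide) v
  have s21 (v : V) : a 2 (A 1 v) = -A 1 (a 2 v) := haA 2 1 (by decide) v
  have s23 (v : V) : a 2 (A 3 v) = -A 3 (a 2 v) := haA 2 3 (by decide) v
  have s22 (v : V) : a 2 (A 2 v) = v - A 2 (a 2 v) := haa 2 v
  have s30 (v : V) : a 3 (A 0 v) = -A 0 (a 3 v) := haA 3 0 (by decide) v
  have s31 (v : V) : a 3 (A 1 v) = -A 1 (a 3 v) := haA 3 1 (by decide) v
  have s32 (v : V) : a 3 (A 2 v) = -A 2 (a 3 v) := haA 3 2 (by decide) v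
  have s33 (v : V) : a 3 (A 3 v) = v - A 3 (a 3 v) := haa 3 v
  simp only [Fin.sum_univ_succ, fockVec, lowC]
  fin_cases j <;>
  (simp [r00, r10, r11, r20, r21, r22, r30, r31, r32, r33, s01, s02, s03, s00, s10, s12, s13, s11, s20, s21, s23, s22, s30, s31, s32, s33, hΩ]
   try abel)

set_option maxHeartbeats 4000000 in
lemma fock_raise {V : Type*} [AddCommGroup V] [Module ℂ V] (a A : Fin 4 → V →ₗ[ℂ] V) (Ω : V)
    (hAA : ∀ i j v, A i (A j v) = -A j (A i v))
    (haA : ∀ i j, i ≠ j → ∀ v, a i (A j v) = -A j (a i v))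
    (haa : ∀ i v, a i (A i v) = v - A i (a i v))
    (hΩ : ∀ i, a i Ω = 0)
    (j : Fin 4) (v : Fin 16 → ℂ) :
    A j (∑ t, v t • fockVec A Ω t) = ∑ t, raiseC v j t • fockVec A Ω t := by
  have hA : ∀ i v, A i (A i v) = 0 := by
    intro i v
    have h := hAA i i v
    have h2 : (2 : ℂ) • A i (A i v) = 0 := by rw [two_smul]; nth_rewrite 1 [h]; simp
    exact (smul_eq_zero.mp h2).resolve_left two_ne_zero
  have r00 (v : V) : A 0 (A 0 v) = 0 := hA 0 v
  have r10 (v : V) : A 1 (A 0 v) = -A 0 (A 1 v) := hAA 1 0 v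
  have r11 (v : V) : A 1 (A 1 v) = 0 := hA 1 v
  have r20 (v : V) : A 2 (A 0 v) = -A 0 (A 2 v) := hAA 2 0 v
  have r21 (v : V) : A 2 (A 1 v) = -A 1 (A 2 v) := hAA 2 1 v
  have r22 (v : V) : A 2 (A 2 v) = 0 := hA 2 v
  have r30 (v : V) : A 3 (A 0 v) = -A 0 (A 3 v) := hAA 3 0 v
  have r31 (v : V) : A 3 (A 1 v) = -A 1 (A 3 v) := hAA 3 1 v
  have r32 (v : V) : A 3 (A 2 v) = -A 2 (A 3 v) := hAA 3 2 v
  have r33 (v : V) : A 3 (A 3 v) = 0 := hA 3 v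
  have s01 (v : V) : a 0 (A 1 v) = -A 1 (a 0 v) := haA 0 1 (by decide) v
  have s02 (v : V) : a 0 (A 2 v) = -A 2 (a 0 v) := haA 0 2 (by decide) v
  have s03 (v : V) : a 0 (A 3 v) = -A 3 (a 0 v) := haA 0 3 (by decide) v
  have s00 (v : V) : a 0 (A 0 v) = v - A 0 (a 0 v) := haa 0 v
  have s10 (v : V) : a 1 (A 0 v) = -A 0 (a 1 v) := haA 1 0 (by decide) v
  have s12 (v : V) : a 1 (A 2 v) = -A 2 (a 1 v) := haA 1 2 (by decide) v
  have s13 (v : V) : a 1 (A 3 v) = -A 3 (a 1 v) := haA 1 3 (by decide) v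
  have s11 (v : V) : a 1 (A 1 v) = v - A 1 (a 1 v) := haa 1 v
  have s20 (v : V) : a 2 (A 0 v) = -A 0 (a 2 v) := haA 2 0 (by decide) v
  have s21 (v : V) : a 2 (A 1 v) = -A 1 (a 2 v) := haA 2 1 (by decide) v
  have s23 (v : V) : a 2 (A 3 v) = -A 3 (a 2 v) := haA 2 3 (by decide) v
  have s22 (v : V) : a 2 (A 2 v) = v - A 2 (a 2 v) := haa 2 v
  have s30 (v : V) : a 3 (A 0 v) = -A 0 (a 3 v) := haA 3 0 (by decide) v
  have s31 (v : V) : a 3 (A 1 v) = -A 1 (a 3 v) := haA 3 1 (by decide) v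
  have s32 (v : V) : a 3 (A 2 v) = -A 2 (a 3 v) := haA 3 2 (by decide) v
  have s33 (v : V) : a 3 (A 3 v) = v - A 3 (a 3 v) := haa 3 v
  simp only [Fin.sum_univ_succ, fockVec, raiseC]
  fin_cases j <;>
  (simp [r00, r10, r11, r20, r21, r22, r30, r31, r32, r33, s01, s02, s03, s00, s10, s12, s13, s11, s20, s21, s23, s22, s30, s31, s32, s33, hΩ]
   try abel)

set_option maxHeartbeats 4000000 in
lemma fock_orth {V : Type*} [AddCommGroup V] [Module ℂ V] (a A : Fin 4 → V →ₗ[ℂ] V) (Ω : V)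
    (hAA : ∀ i j v, A i (A j v) = -A j (A i v))
    (haA : ∀ i j, i ≠ j → ∀ v, a i (A j v) = -A j (a i v))
    (haa : ∀ i v, a i (A i v) = v - A i (a i v))
    (hΩ : ∀ i, a i Ω = 0)
    (B : V → V →ₗ[ℂ] ℂ) (hB : ∀ i v w, B (A i v) w = B v (a i w))
    (hB' : ∀ i v w, B v (A i w) = B (a i v) w)
    (hB0 : ∀ w, B 0 w = 0) (hΩ1 : B Ω Ω = 1) (s t : Fin 16) :
    B (fockVec A Ω s) (fockVec A Ω t) = if s = t then 1 else 0 := by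
  have hA : ∀ i v, A i (A i v) = 0 := by
    intro i v
    have h := hAA i i v
    have h2 : (2 : ℂ) • A i (A i v) = 0 := by rw [two_smul]; nth_rewrite 1 [h]; simp
    exact (smul_eq_zero.mp h2).resolve_left two_ne_zero
  have r00 (v : V) : A 0 (A 0 v) = 0 := hA 0 v
  have r10 (v : V) : A 1 (A 0 v) = -A 0 (A 1 v) := hAA 1 0 v
  have r11 (v : V) : A 1 (A 1 v) = 0 := hA 1 v
  have r20 (v : V) : A 2 (A 0 v) = -A 0 (A 2 v) := hAA 2 0 v
  have r21 (v : V) : A 2 (A 1 v) = -A 1 (A 2 v) := hAA 2 1 v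
  have r22 (v : V) : A 2 (A 2 v) = 0 := hA 2 v
  have r30 (v : V) : A 3 (A 0 v) = -A 0 (A 3 v) := hAA 3 0 v
  have r31 (v : V) : A 3 (A 1 v) = -A 1 (A 3 v) := hAA 3 1 v
  have r32 (v : V) : A 3 (A 2 v) = -A 2 (A 3 v) := hAA 3 2 v
  have r33 (v : V) : A 3 (A 3 v) = 0 := hA 3 v
  have s01 (v : V) : a 0 (A 1 v) = -A 1 (a 0 v) := haA 0 1 (by decide) v
  have s02 (v : V) : a 0 (A 2 v) = -A 2 (a 0 v) := haA 0 2 (by decide) v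
  have s03 (v : V) : a 0 (A 3 v) = -A 3 (a 0 v) := haA 0 3 (by decide) v
  have s00 (v : V) : a 0 (A 0 v) = v - A 0 (a 0 v) := haa 0 v
  have s10 (v : V) : a 1 (A 0 v) = -A 0 (a 1 v) := haA 1 0 (by decide) v
  have s12 (v : V) : a 1 (A 2 v) = -A 2 (a 1 v) := haA 1 2 (by decide) v
  have s13 (v : V) : a 1 (A 3 v) = -A 3 (a 1 v) := haA 1 3 (by decide) v
  have s11 (v : V) : a 1 (A 1 v) = v - A 1 (a 1 v) := haa 1 v
  have s20 (v : V) : a 2 (A 0 v) = -A 0 (a 2 v) := haA 2 0 (by decide) v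
  have s21 (v : V) : a 2 (A 1 v) = -A 1 (a 2 v) := haA 2 1 (by decide) v
  have s23 (v : V) : a 2 (A 3 v) = -A 3 (a 2 v) := haA 2 3 (by decide) v
  have s22 (v : V) : a 2 (A 2 v) = v - A 2 (a 2 v) := haa 2 v
  have s30 (v : V) : a 3 (A 0 v) = -A 0 (a 3 v) := haA 3 0 (by decide) v
  have s31 (v : V) : a 3 (A 1 v) = -A 1 (a 3 v) := haA 3 1 (by decide) v
  have s32 (v : V) : a 3 (A 2 v) = -A 2 (a 3 v) := haA 3 2 (by decide) v
  have s33 (v : V) : a 3 (A 3 v) = v - A 3 (a 3 v) := haa 3 v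
  have hq : ∀ i w, B Ω (A i w) = 0 := by
    intro i w
    rw [hB', hΩ, hB0]
  simp only [fockVec]
  fin_cases s <;> fin_cases t <;>
  simp [r00, r10, r11, r20, r21, r22, r30, r31, r32, r33, s01, s02, s03, s00, s10, s12, s13, s11, s20, s21, s23, s22, s30, s31, s32, s33, hΩ, hB, hq, hΩ1]

end Fock

section Representation

lemma maj_anti {n : ℕ} {c : Fin (2*n) → Matrix (Fin (2^n)) (Fin (2^n)) ℂ} (hc : IsMajorana n c)
    (j k : Fin (2*n)) (h : j ≠ k) : c j * c k = -(c k * c j) := by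
  have := hc.2 j k
  rw [if_neg h] at this
  exact eq_neg_of_add_eq_zero_left this

lemma maj_sq {n : ℕ} {c : Fin (2*n) → Matrix (Fin (2^n)) (Fin (2^n)) ℂ} (hc : IsMajorana n c)
    (j : Fin (2*n)) : c j * c j = 1 := by
  have := hc.2 j j
  rw [if_pos rfl, ← two_smul ℂ] at this
  exact smul_right_injective _ (two_ne_zero (α := ℂ)) this

lemma ann_conjTranspose {n : ℕ} {c : Fin (2*n) → Matrix (Fin (2^n)) (Fin (2^n)) ℂ}
    (hc : IsMajorana n c) (j : Fin n) :
    (ann n c j)ᴴ = ((1:ℂ)/2) • (majA n c j - Complex.I • majB n c j) := by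
  have hA : (majA n c j)ᴴ = majA n c j := hc.1 _
  have hB : (majB n c j)ᴴ = majB n c j := hc.1 _
  simp [ann, conjTranspose_smul, conjTranspose_add, hA, hB, sub_eq_add_neg]

lemma ann_ann {n : ℕ} {c : Fin (2*n) → Matrix (Fin (2^n)) (Fin (2^n)) ℂ}
    (hc : IsMajorana n c) (i j : Fin n) :
    ann n c i * ann n c j = -(ann n c j * ann n c i) := by
  have hAB : majA n c i * majB n c j = -(majB n c j * majA n c i) :=
    maj_anti hc _ _ (by simp [Fin.ext_iff]; omega)
  have hBA : majB n c i * majA n c j = -(majA n c j * majB n c i) :=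
    maj_anti hc _ _ (by simp [Fin.ext_iff]; omega)
  by_cases h : i = j
  · subst h
    have h1 : majA n c i * majA n c i = 1 := maj_sq hc _
    have h2 : majB n c i * majB n c i = 1 := maj_sq hc _
    simp only [ann, smul_mul_assoc, mul_smul_comm, mul_add, add_mul, h1, h2, hAB, smul_add,
      smul_smul, smul_neg]
    match_scalars <;> first | ring1 | linear_combination (1/2) * Complex.I_mul_I
  · have h' : (i : ℕ) ≠ j := fun e => h (Fin.ext e)
    have h1 : majA n c i * majA n c j = -(majA n c j * majA n c i) :=
      maj_anti hc _ _ (by simp [Fin.ext_iff]; omega)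
    have h2 : majB n c i * majB n c j = -(majB n c j * majB n c i) :=
      maj_anti hc _ _ (by simp [Fin.ext_iff]; omega)
    simp only [ann, smul_mul_assoc, mul_smul_comm, mul_add, add_mul, h1, h2, hAB, hBA]
    module

lemma ann_cre_ne {n : ℕ} {c : Fin (2*n) → Matrix (Fin (2^n)) (Fin (2^n)) ℂ}
    (hc : IsMajorana n c) (i j : Fin n) (h : i ≠ j) :
    ann n c i * (ann n c j)ᴴ = -((ann n c j)ᴴ * ann n c i) := by
  have hAB : majA n c i * majB n c j = -(majB n c j * majA n c i) :=
    maj_anti hc _ _ (by simp [Fin.ext_iff]; omega)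
  have hBA : majB n c i * majA n c j = -(majA n c j * majB n c i) :=
    maj_anti hc _ _ (by simp [Fin.ext_iff]; omega)
  have h' : (i : ℕ) ≠ j := fun e => h (Fin.ext e)
  have h1 : majA n c i * majA n c j = -(majA n c j * majA n c i) :=
    maj_anti hc _ _ (by simp [Fin.ext_iff]; omega)
  have h2 : majB n c i * majB n c j = -(majB n c j * majB n c i) :=
    maj_anti hc _ _ (by simp [Fin.ext_iff]; omega)
  rw [ann_conjTranspose hc]
  simp only [ann, smul_mul_assoc, mul_smul_comm, mul_add, add_mul, mul_sub, sub_mul,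
    h1, h2, hAB, hBA]
  module

lemma ann_cre_self {n : ℕ} {c : Fin (2*n) → Matrix (Fin (2^n)) (Fin (2^n)) ℂ}
    (hc : IsMajorana n c) (i : Fin n) :
    ann n c i * (ann n c i)ᴴ = 1 - (ann n c i)ᴴ * ann n c i := by
  have hAB : majA n c i * majB n c i = -(majB n c i * majA n c i) :=
    maj_anti hc _ _ (by simp [Fin.ext_iff])
  have h1 : majA n c i * majA n c i = 1 := maj_sq hc _
  have h2 : majB n c i * majB n c i = 1 := maj_sq hc _
  rw [ann_conjTranspose hc]
  simp only [ann, smul_mul_assoc, mul_smul_comm, mul_add, add_mul, mul_sub, sub_mul,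
    h1, h2, hAB]
  match_scalars <;> first | ring1 | linear_combination (-1/2) * Complex.I_mul_I

lemma vacuum_step {m : Type*} [Fintype m] (a : Fin 4 → Matrix m m ℂ)
    (haa : ∀ i j, a i * a j = -(a j * a i)) (S : Set (Fin 4)) (j : Fin 4) (v : m → ℂ)
    (hv : v ≠ 0) (hS : ∀ k ∈ S, a k *ᵥ v = 0) :
    ∃ w : m → ℂ, w ≠ 0 ∧ ∀ k ∈ insert j S, a k *ᵥ w = 0 := by
  by_cases h : a j *ᵥ v = 0
  · refine ⟨v, hv, ?_⟩
    rintro k (rfl | hk)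
    · exact h
    · exact hS k hk
  · refine ⟨a j *ᵥ v, h, ?_⟩
    rintro k (rfl | hk)
    · have h0 : a k * a k = 0 := by
        have h2 := haa k k
        rw [eq_neg_iff_add_eq_zero, ← two_smul ℂ] at h2
        exact (smul_eq_zero.mp h2).resolve_left two_ne_zero
      rw [mulVec_mulVec, h0, zero_mulVec]
    · rw [mulVec_mulVec, haa, neg_mulVec, ← mulVec_mulVec, hS k hk, mulVec_zero, neg_zero]

lemma vacuum_exists {m : Type*} [Fintype m] [Nonempty m] (a : Fin 4 → Matrix m m ℂ)
    (haa : ∀ i j, a i * a j = -(a j * a i)) :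
    ∃ w : m → ℂ, star w ⬝ᵥ w = 1 ∧ ∀ k, a k *ᵥ w = 0 := by
  obtain ⟨v, hv⟩ := exists_ne (0 : m → ℂ)
  obtain ⟨v0, h0, k0⟩ := vacuum_step a haa ∅ 0 v hv (by simp)
  obtain ⟨v1, h1, k1⟩ := vacuum_step a haa _ 1 v0 h0 k0
  obtain ⟨v2, h2, k2⟩ := vacuum_step a haa _ 2 v1 h1 k1
  obtain ⟨v3, h3, k3⟩ := vacuum_step a haa _ 3 v2 h2 k2
  set N : ℝ := ∑ i, ‖v3 i‖ ^ 2 with hN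
  have hNv : star v3 ⬝ᵥ v3 = (N : ℂ) := by
    simp only [dotProduct, Pi.star_apply, RCLike.star_def, Complex.conj_mul', hN]
    push_cast
    rfl
  have hNpos : 0 < N := by
    have hne : N ≠ 0 := by
      intro hz
      apply h3
      rw [hz] at hNv
      exact dotProduct_star_self_eq_zero.mp (by rw [dotProduct_comm]; simpa using hNv)
    have : 0 ≤ N := Finset.sum_nonneg (fun i _ => by positivity)
    exact lt_of_le_of_ne this hne.symm
  refine ⟨((Real.sqrt N)⁻¹ : ℂ) • v3, ?_, ?_⟩
  · rw [star_smul, smul_dotProduct, dotProduct_smul, hNv]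
    have hs : ((Real.sqrt N : ℝ) : ℂ) * (Real.sqrt N : ℝ) = N := by
      rw [← Complex.ofReal_mul, Real.mul_self_sqrt hNpos.le]
    have hs0 : ((Real.sqrt N : ℝ) : ℂ) ≠ 0 := by
      exact_mod_cast (Real.sqrt_pos.mpr hNpos).ne'
    simp only [star_inv₀, RCLike.star_def, Complex.conj_ofReal, smul_eq_mul]
    rw [← hs]
    field_simp
  · intro k
    rw [mulVec_smul, k3 k (by fin_cases k <;> simp), smul_zero]

lemma fock_exists {m : Type*} [Fintype m] [DecidableEq m] (hm : Fintype.card m = 16)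
    (a : Fin 4 → Matrix m m ℂ)
    (haa : ∀ i j, a i * a j = -(a j * a i))
    (hne : ∀ i j, i ≠ j → a i * (a j)ᴴ = -((a j)ᴴ * a i))
    (hself : ∀ i, a i * (a i)ᴴ = 1 - (a i)ᴴ * a i) :
    ∃ E : (Fin 16 → ℂ) →ₗ[ℂ] (m → ℂ), (∀ j v, a j *ᵥ E v = E (lowC v j)) ∧
      (∀ j v, (a j)ᴴ *ᵥ E v = E (raiseC v j)) ∧
      (∀ v w, star (E v) ⬝ᵥ E w = star v ⬝ᵥ w) ∧ Function.Surjective E := by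
  have : Nonempty m := Fintype.card_pos_iff.mp (by omega)
  obtain ⟨Ω, hΩ1, hΩ⟩ := vacuum_exists a haa
  let l : Fin 4 → (m → ℂ) →ₗ[ℂ] (m → ℂ) := fun j => (a j).mulVecLin
  let L : Fin 4 → (m → ℂ) →ₗ[ℂ] (m → ℂ) := fun j => (a j)ᴴ.mulVecLin
  have hAA : ∀ i j v, L i (L j v) = -L j (L i v) := by
    intro i j v
    have h := congrArg conjTranspose (haa j i)
    rw [conjTranspose_neg, conjTranspose_mul, conjTranspose_mul] at h
    simp only [L, mulVecLin_apply, mulVec_mulVec, h, neg_mulVec]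
  have hlL : ∀ i j, i ≠ j → ∀ v, l i (L j v) = -L j (l i v) := by
    intro i j hij v
    simp only [L, l, mulVecLin_apply, mulVec_mulVec, hne i j hij, neg_mulVec]
  have hll : ∀ i v, l i (L i v) = v - L i (l i v) := by
    intro i v
    simp only [L, l, mulVecLin_apply, mulVec_mulVec, hself i, sub_mulVec, one_mulVec]
  have hΩ' : ∀ i, l i Ω = 0 := hΩ
  let B : (m → ℂ) → (m → ℂ) →ₗ[ℂ] ℂ := fun v =>
    { toFun := fun w => star v ⬝ᵥ w
      map_add' := fun x y => dotProduct_add _ _ _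
      map_smul' := fun r x => dotProduct_smul _ _ _ }
  have horth := fock_orth l L Ω hAA hlL hll hΩ' B
    (by intro i v w
        change star ((a i)ᴴ *ᵥ v) ⬝ᵥ w = star v ⬝ᵥ (a i *ᵥ w)
        rw [star_mulVec, conjTranspose_conjTranspose, dotProduct_mulVec])
    (by intro i v w
        change star v ⬝ᵥ ((a i)ᴴ *ᵥ w) = star (a i *ᵥ v) ⬝ᵥ w
        rw [star_mulVec, dotProduct_mulVec])
    (by intro w
        change star 0 ⬝ᵥ w = 0
        simp)
    hΩ1
  let U : Matrix m (Fin 16) ℂ := Matrix.of fun i t => fockVec L Ω t i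
  have hU : ∀ v, U *ᵥ v = ∑ t, v t • fockVec L Ω t := by
    intro v
    ext i
    simp [U, mulVec, dotProduct, mul_comm]
  have hUU : Uᴴ * U = 1 := by
    ext s t
    rw [mul_apply, one_apply, ← horth s t]
    rfl
  have hUU' : U * Uᴴ = 1 :=
    (Matrix.mul_eq_one_comm_of_card_eq _ _ _ (by simp [hm])).mp hUU
  refine ⟨U.mulVecLin, ?_, ?_, ?_, ?_⟩
  · intro j v
    rw [mulVecLin_apply, mulVecLin_apply, hU, hU]
    exact fock_low l L Ω hAA hlL hll hΩ' j v
  · intro j v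
    rw [mulVecLin_apply, mulVecLin_apply, hU, hU]
    exact fock_raise l L Ω hAA hlL hll hΩ' j v
  · intro v w
    rw [mulVecLin_apply, mulVecLin_apply, star_mulVec, ← dotProduct_mulVec, mulVec_mulVec, hUU,
      one_mulVec]
  · intro v
    exact ⟨Uᴴ *ᵥ v, by rw [mulVecLin_apply, mulVec_mulVec, hUU', one_mulVec]⟩

end Representation

section Spectral

/-- The Hamiltonian in Fock coordinates. -/
def hamC (x : Fin 16 → ℂ) : Fin 16 → ℂ :=
  (-(1/2 : ℂ)) • (raiseC (lowC x 1) 0 + raiseC (lowC x 0) 1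
          + raiseC (lowC x 2) 1 + raiseC (lowC x 1) 2
          + raiseC (lowC x 3) 2 + raiseC (lowC x 2) 3)
        + (((1:ℂ)/4) • x - raiseC (lowC (raiseC (lowC x 1) 1) 0) 0)
        + (((1:ℂ)/4) • x - raiseC (lowC (raiseC (lowC x 2) 2) 1) 1)
        + (((1:ℂ)/4) • x - raiseC (lowC (raiseC (lowC x 3) 3) 2) 2)
        + ((1:ℂ)/2) • (raiseC (lowC x 0) 0 - ((1:ℂ)/2) • x)
        + (raiseC (lowC x 1) 1 - ((1:ℂ)/2) • x)
        + (raiseC (lowC x 2) 2 - ((1:ℂ)/2) • x)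
        + ((1:ℂ)/2) • (raiseC (lowC x 3) 3 - ((1:ℂ)/2) • x)

/-- Unnormalized top eigenvector in Fock coordinates. -/
def topC (r : ℂ) : Fin 16 → ℂ :=
  ![0, 0, 0, 1, 0, -(2 + r), 1 + r, 0, 0, 1 + r, -(2 + r), 0, 1, 0, 0, 0]

set_option maxHeartbeats 4000000 in
lemma eig_solve (r : ℂ) (hr : r ^ 2 = 3) (x : Fin 16 → ℂ)
    (hx : hamC x = ((3 + 2 * r) / 4) • x) : x = x 12 • topC r := by
  have h0 := congrFun hx 0
  have h1 := congrFun hx 1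
  have h2 := congrFun hx 2
  have h3 := congrFun hx 3
  have h4 := congrFun hx 4
  have h5 := congrFun hx 5
  have h6 := congrFun hx 6
  have h7 := congrFun hx 7
  have h8 := congrFun hx 8
  have h9 := congrFun hx 9
  have h10 := congrFun hx 10
  have h11 := congrFun hx 11
  have h13 := congrFun hx 13
  have h14 := congrFun hx 14
  have h15 := congrFun hx 15
  simp only [hamC, Pi.add_apply, Pi.sub_apply, Pi.smul_apply, smul_eq_mul] at h0 h1 h2 h3 h4 h5 h6 h7 h8 h9 h10 h11 h13 h14 h15
  simp [lowC, raiseC] at h0 h1 h2 h3 h4 h5 h6 h7 h8 h9 h10 h11 h13 h14 h15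
  have g0 : x 0 = 0 := by
    linear_combination ((-1) + (1/3) * r) * h0 + (((1/3) * (1/2)) * x 0) * hr
  have g1 : x 1 = 0 := by
    linear_combination ((-3/4) + (1/12) * r) * h1 + ((-3/4) + (7/12) * r) * h2 + ((-1/4) + (1/12) * r) * h4 + ((3/4) + (-5/12) * r) * h8 + (((1/12) * (1/2)) * x 1 + ((7/12) * (1/2)) * x 2 + ((1/12) * (1/2)) * x 4 + ((-5/12) * (1/2)) * x 8) * hr
  have g2 : x 2 = 0 := by
    linear_combination ((-3/4) + (7/12) * r) * h1 + ((-1/4) + (-5/12) * r) * h2 + ((1/4) + (1/12) * r) * h4 + ((-1/4) + (1/12) * r) * h8 + (((7/12) * (1/2)) * x 1 + ((-5/12) * (1/2)) * x 2 + ((1/12) * (1/2)) * x 4 + ((1/12) * (1/2)) * x 8) * hr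
  have g3 : x 3 = (1 + (0) * r) * x 12 := by
    linear_combination ((-3) + (1) * r) * h3 + ((1) + (1) * r) * h5 + ((0) + (-1) * r) * h6 + ((0) + (-1) * r) * h9 + ((2) + (0) * r) * h10 + (((1) * (1/2)) * x 3 + ((1) * (1/2)) * x 5 + ((-1) * (1/2)) * x 6 + ((-1) * (1/2)) * x 9) * hr
  have g4 : x 4 = 0 := by
    linear_combination ((-1/4) + (1/12) * r) * h1 + ((1/4) + (1/12) * r) * h2 + ((-1/4) + (-5/12) * r) * h4 + ((-3/4) + (7/12) * r) * h8 + (((1/12) * (1/2)) * x 1 + ((1/12) * (1/2)) * x 2 + ((-5/12) * (1/2)) * x 4 + ((7/12) * (1/2)) * x 8) * hr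
  have g5 : x 5 = (-2 + (-1) * r) * x 12 := by
    linear_combination ((1) + (1) * r) * h3 + ((-5) + (-3) * r) * h5 + ((3) + (2) * r) * h6 + ((3) + (2) * r) * h9 + ((-4) + (-2) * r) * h10 + (((1) * (1/2)) * x 3 + ((-3) * (1/2)) * x 5 + ((2) * (1/2)) * x 6 + ((2) * (1/2)) * x 9 + ((-2) * (1/2)) * x 10) * hr
  have g6 : x 6 = (1 + (1) * r) * x 12 := by
    linear_combination ((0) + (-1) * r) * h3 + ((3) + (2) * r) * h5 + ((-5/2) + (-3/2) * r) * h6 + ((-7/2) + (-1/2) * r) * h9 + ((2) + (2) * r) * h10 + (((-1) * (1/2)) * x 3 + ((2) * (1/2)) * x 5 + ((-3/2) * (1/2)) * x 6 + ((-1/2) * (1/2)) * x 9 + ((2) * (1/2)) * x 10) * hr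
  have g7 : x 7 = 0 := by
    linear_combination ((-3/4) + (1/12) * r) * h7 + ((-3/4) + (7/12) * r) * h11 + ((-1/4) + (1/12) * r) * h13 + ((3/4) + (-5/12) * r) * h14 + (((1/12) * (1/2)) * x 7 + ((7/12) * (1/2)) * x 11 + ((1/12) * (1/2)) * x 13 + ((-5/12) * (1/2)) * x 14) * hr
  have g8 : x 8 = 0 := by
    linear_combination ((3/4) + (-5/12) * r) * h1 + ((-1/4) + (1/12) * r) * h2 + ((-3/4) + (7/12) * r) * h4 + ((-3/4) + (1/12) * r) * h8 + (((-5/12) * (1/2)) * x 1 + ((1/12) * (1/2)) * x 2 + ((7/12) * (1/2)) * x 4 + ((1/12) * (1/2)) * x 8) * hr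
  have g9 : x 9 = (1 + (1) * r) * x 12 := by
    linear_combination ((0) + (-1) * r) * h3 + ((3) + (2) * r) * h5 + ((-7/2) + (-1/2) * r) * h6 + ((-5/2) + (-3/2) * r) * h9 + ((2) + (2) * r) * h10 + (((-1) * (1/2)) * x 3 + ((2) * (1/2)) * x 5 + ((-1/2) * (1/2)) * x 6 + ((-3/2) * (1/2)) * x 9 + ((2) * (1/2)) * x 10) * hr
  have g10 : x 10 = (-2 + (-1) * r) * x 12 := by
    linear_combination ((2) + (0) * r) * h3 + ((-4) + (-2) * r) * h5 + ((2) + (2) * r) * h6 + ((2) + (2) * r) * h9 + ((-4) + (-2) * r) * h10 + (((-2) * (1/2)) * x 5 + ((2) * (1/2)) * x 6 + ((2) * (1/2)) * x 9 + ((-2) * (1/2)) * x 10) * hr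
  have g11 : x 11 = 0 := by
    linear_combination ((-3/4) + (7/12) * r) * h7 + ((-1/4) + (-5/12) * r) * h11 + ((1/4) + (1/12) * r) * h13 + ((-1/4) + (1/12) * r) * h14 + (((7/12) * (1/2)) * x 7 + ((-5/12) * (1/2)) * x 11 + ((1/12) * (1/2)) * x 13 + ((1/12) * (1/2)) * x 14) * hr
  have g13 : x 13 = 0 := by
    linear_combination ((-1/4) + (1/12) * r) * h7 + ((1/4) + (1/12) * r) * h11 + ((-1/4) + (-5/12) * r) * h13 + ((-3/4) + (7/12) * r) * h14 + (((1/12) * (1/2)) * x 7 + ((1/12) * (1/2)) * x 11 + ((-5/12) * (1/2)) * x 13 + ((7/12) * (1/2)) * x 14) * hr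
  have g14 : x 14 = 0 := by
    linear_combination ((3/4) + (-5/12) * r) * h7 + ((-1/4) + (1/12) * r) * h11 + ((-3/4) + (7/12) * r) * h13 + ((-3/4) + (1/12) * r) * h14 + (((-5/12) * (1/2)) * x 7 + ((1/12) * (1/2)) * x 11 + ((7/12) * (1/2)) * x 13 + ((1/12) * (1/2)) * x 14) * hr
  have g15 : x 15 = 0 := by
    linear_combination ((-1) + (1/3) * r) * h15 + (((1/3) * (1/2)) * x 15) * hr
  ext t
  fin_cases t <;> simp [topC] <;> first | assumption | skip
  · linear_combination g3
  · linear_combination g5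
  · linear_combination g6
  · linear_combination g9
  · linear_combination g10

end Spectral

section Covariance

/-- Majorana operators in Fock coordinates. -/
def majC (x : Fin 16 → ℂ) : Fin 8 → Fin 16 → ℂ :=
  ![lowC x 0 + raiseC x 0, (-Complex.I) • (lowC x 0 - raiseC x 0),
    lowC x 1 + raiseC x 1, (-Complex.I) • (lowC x 1 - raiseC x 1),
    lowC x 2 + raiseC x 2, (-Complex.I) • (lowC x 2 - raiseC x 2),
    lowC x 3 + raiseC x 3, (-Complex.I) • (lowC x 3 - raiseC x 3)]

/-- The covariance matrix of the top eigenvector. -/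
def covT {R : Type*} [Field R] (r : R) : Matrix (Fin 8) (Fin 8) R :=
  !![0, 0, 0, -(1 + r)/3, 0, 0, 0, 1/3;
     0, 0, (1 + r)/3, 0, 0, 0, -1/3, 0;
     0, -(1 + r)/3, 0, 0, 0, -1/3, 0, 0;
     (1 + r)/3, 0, 0, 0, 1/3, 0, 0, 0;
     0, 0, 0, -1/3, 0, 0, 0, -(1 + r)/3;
     0, 0, 1/3, 0, 0, 0, (1 + r)/3, 0;
     0, 1/3, 0, 0, 0, -(1 + r)/3, 0, 0;
     -1/3, 0, 0, 0, (1 + r)/3, 0, 0, 0]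

lemma topC_norm (r : ℂ) (hr : r ^ 2 = 3) (hs : star r = r) :
    star (topC r) ⬝ᵥ topC r = 24 + 12 * r := by
  simp only [RCLike.star_def] at hs
  simp [dotProduct, Fin.sum_univ_succ, topC, hs, map_ofNat]
  linear_combination 4 * hr

set_option maxHeartbeats 4000000 in
lemma cov_entries (r : ℂ) (hr : r ^ 2 = 3) (hs : star r = r) (j k : Fin 8) :
    (Complex.I / 2) * (star (majC (topC r) j) ⬝ᵥ majC (topC r) k
      - star (majC (topC r) k) ⬝ᵥ majC (topC r) j) = (24 + 12 * r) * covT r j k := by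
  simp only [RCLike.star_def] at hs
  fin_cases j <;> fin_cases k <;>
    simp [majC, covT, dotProduct, Fin.sum_univ_succ, lowC, raiseC, topC, hs, map_ofNat]
  all_goals first
    | ring1
    | (ring_nf; simp only [Complex.I_sq, hr]; ring1)

lemma covT_mul (r : ℝ) (hr : r ^ 2 = 3) :
    covT r * (covT r)ᵀ = ((5 + 2 * r) / 9) • (1 : Matrix (Fin 8) (Fin 8) ℝ) := by
  ext j k
  rw [mul_apply]
  simp only [transpose_apply, Fin.sum_univ_succ]
  fin_cases j <;> fin_cases k <;> simp [covT, one_apply] <;> first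
    | ring1
    | linear_combination (1/9) * hr

end Covariance

section NotGaussian

/-- Linear combination of the Majorana operators with real coefficients. -/
def rotMaj (c : Fin (2*4) → Matrix (Fin (2^4)) (Fin (2^4)) ℂ)
    (R : Matrix (Fin (2*4)) (Fin (2*4)) ℝ) (i : Fin (2*4)) : Matrix (Fin (2^4)) (Fin (2^4)) ℂ :=
  ∑ k, ((R i k : ℝ) : ℂ) • c k

lemma rotMaj_anti {c : Fin (2*4) → Matrix (Fin (2^4)) (Fin (2^4)) ℂ} (hc : IsMajorana 4 c)
    {R : Matrix (Fin (2*4)) (Fin (2*4)) ℝ} (hR : R * Rᵀ = 1) (i j : Fin (2*4)) :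
    rotMaj c R i * rotMaj c R j + rotMaj c R j * rotMaj c R i
      = (if i = j then (2 : ℂ) else 0) • 1 := by
  have h1 : rotMaj c R i * rotMaj c R j + rotMaj c R j * rotMaj c R i
      = ∑ k, ∑ l, (((R i k : ℝ) : ℂ) * ((R j l : ℝ) : ℂ)) • (c k * c l + c l * c k) := by
    have e1 : rotMaj c R i * rotMaj c R j
        = ∑ k, ∑ l, (((R i k : ℝ) : ℂ) * ((R j l : ℝ) : ℂ)) • (c k * c l) := by
      simp only [rotMaj, Finset.sum_mul_sum, smul_mul_smul_comm]
    have e2 : rotMaj c R j * rotMaj c R i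
        = ∑ k, ∑ l, (((R i k : ℝ) : ℂ) * ((R j l : ℝ) : ℂ)) • (c l * c k) := by
      simp only [rotMaj, Finset.sum_mul_sum, smul_mul_smul_comm]
      rw [Finset.sum_comm]
      simp only [mul_comm]
    rw [e1, e2]
    simp only [← Finset.sum_add_distrib, smul_add]
  rw [h1]
  have h2 : ∀ k l, c k * c l + c l * c k
      = (if k = l then (2 : ℂ) else 0) • (1 : Matrix (Fin (2^4)) (Fin (2^4)) ℂ) := by
    intro k l
    rw [hc.2 k l]
    split_ifs <;> simp
  simp only [h2, smul_smul, ← Finset.sum_smul]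
  congr 1
  have h3 : ∑ k, R i k * R j k = if i = j then 1 else 0 := by
    have := congrFun (congrFun hR i) j
    rwa [mul_apply, one_apply] at this
  have h4 : ((∑ k, R i k * R j k : ℝ) : ℂ) = if i = j then 1 else 0 := by
    rw [h3]; split_ifs <;> simp
  push_cast at h4
  simp only [mul_ite, mul_zero, Finset.sum_ite_eq, Finset.mem_univ, if_true]
  rw [← Finset.sum_mul, h4]
  split_ifs <;> simp

lemma anti_of_ne {M : Type*} [Ring M] {p q u v : M} (h1 : p * u = -(u * p))
    (h2 : p * v = -(v * p)) (h3 : q * u = -(u * q)) (h4 : q * v = -(v * q)) :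
    Commute (p * q) (u * v) := by
  have ha : Commute (p * q) u := by
    change p * q * u = u * (p * q)
    rw [mul_assoc, h3, mul_neg, ← mul_assoc, h1, neg_mul, neg_neg, mul_assoc]
  have hb : Commute (p * q) v := by
    change p * q * v = v * (p * q)
    rw [mul_assoc, h4, mul_neg, ← mul_assoc, h2, neg_mul, neg_neg, mul_assoc]
  exact ha.mul_right hb

lemma gauss_commute {c : Fin (2*4) → Matrix (Fin (2^4)) (Fin (2^4)) ℂ} (hc : IsMajorana 4 c)
    (lam : Fin 4 → ℝ) {R : Matrix (Fin (2*4)) (Fin (2*4)) ℝ} (hR : R * Rᵀ = 1) :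
    Commute (rotMaj c R 0 * rotMaj c R 1) (gaussOf 4 c lam R) := by
  have hanti : ∀ i j, i ≠ j → rotMaj c R i * rotMaj c R j = -(rotMaj c R j * rotMaj c R i) := by
    intro i j h
    have := rotMaj_anti hc hR i j
    rw [if_neg h, zero_smul] at this
    exact eq_neg_of_add_eq_zero_left this
  unfold gaussOf
  apply Commute.smul_right
  apply Commute.list_prod_right
  intro y hy
  rw [List.mem_map] at hy
  obtain ⟨j, -, rfl⟩ := hy
  apply Commute.add_right (Commute.one_right _)
  apply Commute.smul_right
  change Commute _ (rotMaj c R ⟨2*j, _⟩ * rotMaj c R ⟨2*j+1, _⟩)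
  by_cases hj : j = 0
  · subst hj
    exact Commute.refl _
  · have hj' : (j : ℕ) ≠ 0 := fun e => hj (Fin.ext e)
    apply anti_of_ne <;> apply hanti <;> intro e
    · have e' : (0 : ℕ) = 2 * j := congrArg Fin.val e
      omega
    · have e' : (0 : ℕ) = 2 * j + 1 := congrArg Fin.val e
      omega
    · have e' : (1 : ℕ) = 2 * j := congrArg Fin.val e
      omega
    · have e' : (1 : ℕ) = 2 * j + 1 := congrArg Fin.val e
      omega

lemma not_gaussian {c : Fin (2*4) → Matrix (Fin (2^4)) (Fin (2^4)) ℂ} (hc : IsMajorana 4 c)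
    (ψ : Fin (2^4) → ℂ) (hψ : star ψ ⬝ᵥ ψ = 1)
    (Γ : Matrix (Fin (2*4)) (Fin (2*4)) ℝ)
    (hΓ : ∀ j k, ((Γ j k : ℝ) : ℂ)
        = (Complex.I / 2) * (star ψ ⬝ᵥ ((c j * c k - c k * c j).mulVec ψ)))
    (s : ℝ) (hs : s < 1) (hG : Γ * Γᵀ = s • 1) :
    ¬ IsGaussianState 4 c (vecMulVec ψ (star ψ)) := by
  rintro ⟨lam, R, -, hR, -, hρ⟩
  have hcomm := gauss_commute hc lam hR
  rw [← hρ] at hcomm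
  have hdd := rotMaj_anti hc hR
  set D := rotMaj c R 0 * rotMaj c R 1 with hD
  have hD2 : D * D = -1 := by
    have h00 : rotMaj c R 0 * rotMaj c R 0 = 1 := by
      have := hdd 0 0
      rw [if_pos rfl, ← two_smul ℂ] at this
      exact smul_right_injective _ (two_ne_zero (α := ℂ)) this
    have h11 : rotMaj c R 1 * rotMaj c R 1 = 1 := by
      have := hdd 1 1
      rw [if_pos rfl, ← two_smul ℂ] at this
      exact smul_right_injective _ (two_ne_zero (α := ℂ)) this
    have h01 : rotMaj c R 1 * rotMaj c R 0 = -(rotMaj c R 0 * rotMaj c R 1) := by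
      have := hdd 1 0
      rw [if_neg (by decide), zero_smul] at this
      exact eq_neg_of_add_eq_zero_left this
    calc D * D = rotMaj c R 0 * (rotMaj c R 1 * rotMaj c R 0) * rotMaj c R 1 := by
          simp only [hD, mul_assoc]
      _ = -((rotMaj c R 0 * rotMaj c R 0) * (rotMaj c R 1 * rotMaj c R 1)) := by
          rw [h01]; simp only [mul_neg, neg_mul, mul_assoc]
      _ = -1 := by rw [h00, h11, one_mul]
  set κ : ℂ := star ψ ⬝ᵥ (D *ᵥ ψ) with hκ
  have hDψ : D *ᵥ ψ = κ • ψ := by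
    have h := congrArg (fun M => M *ᵥ ψ) hcomm.eq
    simp only [← mulVec_mulVec, vecMulVec_mulVec, hψ] at h
    simpa using h
  have hκ2 : κ * κ = -1 := by
    have h := congrArg (fun M => star ψ ⬝ᵥ (M *ᵥ ψ)) hD2
    simp only [← mulVec_mulVec, hDψ, mulVec_smul, neg_mulVec, one_mulVec, dotProduct_smul,
      dotProduct_neg, hψ, smul_eq_mul, mul_one] at h
    exact h
  set g : ℝ := ∑ k, ∑ l, R 0 k * R 1 l * Γ k l with hg
  have hexp : ∀ k l, star ψ ⬝ᵥ ((c k * c l) *ᵥ ψ)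
      = (if k = l then 1 else 0) - Complex.I * (Γ k l : ℂ) := by
    intro k l
    rw [hΓ]
    have h := congrArg (fun M => star ψ ⬝ᵥ (M *ᵥ ψ)) (hc.2 k l)
    simp only [add_mulVec, dotProduct_add] at h
    have h' : star ψ ⬝ᵥ ((if k = l then (2 : ℂ) • (1 : Matrix (Fin (2^4)) (Fin (2^4)) ℂ)
        else 0) *ᵥ ψ) = if k = l then 2 else 0 := by
      split_ifs
      · rw [smul_mulVec, one_mulVec, dotProduct_smul, hψ]; simp
      · simp
    rw [h'] at h
    rw [sub_mulVec, dotProduct_sub]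
    have h'' : (if k = l then (2:ℂ) else 0) = 2 * (if k = l then 1 else 0) := by
      split_ifs <;> simp
    rw [h''] at h
    linear_combination (1/2) * h + (1/2) * (star ψ ⬝ᵥ ((c k * c l) *ᵥ ψ)
      - star ψ ⬝ᵥ ((c l * c k) *ᵥ ψ)) * Complex.I_mul_I
  have hRR : ∀ i j, ∑ k, R i k * R j k = if i = j then 1 else 0 := by
    intro i j
    have := congrFun (congrFun hR i) j
    rwa [mul_apply, one_apply] at this
  have hκg : κ = -Complex.I * g := by
    have e1 : D = ∑ k, ∑ l, (((R 0 k : ℝ) : ℂ) * ((R 1 l : ℝ) : ℂ)) • (c k * c l) := by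
      simp only [hD, rotMaj, Finset.sum_mul_sum, smul_mul_smul_comm]
    have h0 : ∑ k, ((R 0 k : ℝ) : ℂ) * ((R 1 k : ℝ) : ℂ) = 0 := by
      have := hRR 0 1
      rw [if_neg (by decide)] at this
      exact_mod_cast this
    rw [hκ, e1]
    simp only [sum_mulVec, dotProduct_sum, smul_mulVec, dotProduct_smul, hexp, smul_eq_mul,
      mul_sub, Finset.sum_sub_distrib, mul_ite, mul_one, mul_zero, Finset.sum_ite_eq,
      Finset.mem_univ, if_true, h0, zero_sub, hg]
    push_cast
    simp only [Finset.mul_sum, ← Finset.sum_neg_distrib]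
    refine Finset.sum_congr rfl fun k _ => Finset.sum_congr rfl fun l _ => ?_
    ring
  have hg2 : g ^ 2 = 1 := by
    rw [hκg] at hκ2
    have : ((g ^ 2 : ℝ) : ℂ) = 1 := by
      push_cast
      linear_combination -hκ2 + (g:ℂ)^2 * Complex.I_mul_I
    exact_mod_cast this
  have hcs : g ^ 2 ≤ s := by
    have h1 : g = ∑ l, (∑ k, R 0 k * Γ k l) * R 1 l := by
      rw [hg, Finset.sum_comm]
      refine Finset.sum_congr rfl fun l _ => ?_
      rw [Finset.sum_mul]
      refine Finset.sum_congr rfl fun k _ => ?_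
      ring
    have h2 : ∑ l, (R 1 l) ^ 2 = 1 := by
      have := hRR 1 1
      simpa [sq] using this
    have h3 : ∑ l, (∑ k, R 0 k * Γ k l) ^ 2 = s := by
      have hGG : ∀ k k', ∑ l, Γ k l * Γ k' l = if k = k' then s else 0 := by
        intro k k'
        have := congrFun (congrFun hG k) k'
        rw [mul_apply, Matrix.smul_apply, one_apply] at this
        simpa using this
      calc ∑ l, (∑ k, R 0 k * Γ k l) ^ 2
          = ∑ l, ∑ k, ∑ k', R 0 k * R 0 k' * (Γ k l * Γ k' l) := by
            refine Finset.sum_congr rfl fun l _ => ?_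
            rw [sq, Finset.sum_mul_sum]
            refine Finset.sum_congr rfl fun k _ => Finset.sum_congr rfl fun k' _ => ?_
            ring
        _ = ∑ k, ∑ k', R 0 k * R 0 k' * ∑ l, Γ k l * Γ k' l := by
            rw [Finset.sum_comm]
            refine Finset.sum_congr rfl fun k _ => ?_
            rw [Finset.sum_comm]
            simp only [Finset.mul_sum]
        _ = s := by
            simp only [hGG, mul_ite, mul_zero, Finset.sum_ite_eq, Finset.mem_univ, if_true]
            rw [← Finset.sum_mul, hRR, if_pos rfl, one_mul]
    have := Finset.sum_mul_sq_le_sq_mul_sq Finset.univ (fun l => ∑ k, R 0 k * Γ k l)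
      (fun l => R 1 l)
    rw [h2, h3, mul_one, ← h1] at this
    exact this
  linarith

end NotGaussian

/-- the top eigenstate of the 4-mode fermionic Hamiltonian (the
Jordan-Wigner image of the 4-qubit Heisenberg chain) has covariance matrix with
`Γ Γᵀ = s·1`, `s = (5 + 2√3)/9 < 1`, hence is not a fermionic Gaussian state. -/
theorem heisenberg_top_state_covariance
    (c : Fin (2*4) → Matrix (Fin (2^4)) (Fin (2^4)) ℂ) (hc : IsMajorana 4 c)
    (H : Matrix (Fin (2^4)) (Fin (2^4)) ℂ)
    (hH : H = (-(1/2 : ℂ)) • ((ann 4 c 0)ᴴ * ann 4 c 1 + (ann 4 c 1)ᴴ * ann 4 c 0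
          + (ann 4 c 1)ᴴ * ann 4 c 2 + (ann 4 c 2)ᴴ * ann 4 c 1
          + (ann 4 c 2)ᴴ * ann 4 c 3 + (ann 4 c 3)ᴴ * ann 4 c 2)
        + (((1:ℂ)/4) • 1 - num 4 c 0 * num 4 c 1)
        + (((1:ℂ)/4) • 1 - num 4 c 1 * num 4 c 2)
        + (((1:ℂ)/4) • 1 - num 4 c 2 * num 4 c 3)
        + ((1:ℂ)/2) • (num 4 c 0 - ((1:ℂ)/2) • 1)
        + (num 4 c 1 - ((1:ℂ)/2) • 1)
        + (num 4 c 2 - ((1:ℂ)/2) • 1)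
        + ((1:ℂ)/2) • (num 4 c 3 - ((1:ℂ)/2) • 1))
    (hmax : IsGreatest {x : ℝ | (x : ℂ) ∈ spectrum ℂ H} ((3 + 2 * Real.sqrt 3) / 4))
    (ψ : Fin (2^4) → ℂ) (hψ : star ψ ⬝ᵥ ψ = 1)
    (heig : H.mulVec ψ = (((3 + 2 * Real.sqrt 3) / 4 : ℝ) : ℂ) • ψ)
    (Γ : Matrix (Fin (2*4)) (Fin (2*4)) ℝ)
    (hΓ : ∀ j k, ((Γ j k : ℝ) : ℂ)
        = (Complex.I / 2) * (star ψ ⬝ᵥ ((c j * c k - c k * c j).mulVec ψ))) :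
    Γ * Γᵀ = ((5 + 2 * Real.sqrt 3) / 9) • 1 ∧
    ¬ IsGaussianState 4 c (vecMulVec ψ (star ψ)) := by
  have hm : Fintype.card (Fin (2^4)) = 16 := by simp
  obtain ⟨E, hlow, hraise, hinner, hsurj⟩ := fock_exists hm (ann 4 c) (ann_ann hc)
    (ann_cre_ne hc) (ann_cre_self hc)
  obtain ⟨x, rfl⟩ := hsurj ψ
  have hEinj : Function.Injective E := by
    rw [injective_iff_map_eq_zero]
    intro v hv
    have h := hinner v v
    rw [hv, dotProduct_zero] at h
    exact dotProduct_star_self_eq_zero.mp h.symm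
  set r : ℝ := Real.sqrt 3 with hrdef
  have hr : r ^ 2 = 3 := Real.sq_sqrt (by norm_num)
  have hrC : (r : ℂ) ^ 2 = 3 := by exact_mod_cast hr
  have hrs : star (r : ℂ) = r := Complex.conj_ofReal r
  have hham : H *ᵥ E x = E (hamC x) := by
    rw [hH]
    simp only [num, add_mulVec, sub_mulVec, smul_mulVec, one_mulVec, ← mulVec_mulVec, hlow,
      hraise, hamC, map_add, map_sub, map_smul]
  have hx : hamC x = ((3 + 2 * (r : ℂ)) / 4) • x := by
    apply hEinj
    rw [← hham, heig, map_smul]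
    push_cast
    rfl
  have hsol := eig_solve (r : ℂ) hrC x hx
  set t : ℂ := x 12 with ht
  have hnorm : star t * t * (24 + 12 * (r : ℂ)) = 1 := by
    rw [hinner, hsol, star_smul, smul_dotProduct, dotProduct_smul, topC_norm _ hrC hrs] at hψ
    simpa [mul_assoc] using hψ
  have hmajA : ∀ (j : Fin 4) (v : Fin 16 → ℂ), majA 4 c j *ᵥ E v = E (lowC v j + raiseC v j) := by
    intro j v
    have h : majA 4 c j = ann 4 c j + (ann 4 c j)ᴴ := by
      rw [ann_conjTranspose hc, ann]
      module
    rw [h, add_mulVec, hlow, hraise, map_add]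
  have hmajB : ∀ (j : Fin 4) (v : Fin 16 → ℂ),
      majB 4 c j *ᵥ E v = E ((-Complex.I) • (lowC v j - raiseC v j)) := by
    intro j v
    have h : majB 4 c j = (-Complex.I) • (ann 4 c j - (ann 4 c j)ᴴ) := by
      rw [ann_conjTranspose hc, ann]
      match_scalars
      · linear_combination Complex.I_mul_I
      · ring
    rw [h, smul_mulVec, sub_mulVec, hlow, hraise, map_smul, map_sub]
  have hmaj : ∀ (k : Fin (2*4)) (v : Fin 16 → ℂ), c k *ᵥ E v = E (majC v k) := by
    intro k v
    fin_cases k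
    · exact hmajA 0 v
    · exact hmajB 0 v
    · exact hmajA 1 v
    · exact hmajB 1 v
    · exact hmajA 2 v
    · exact hmajB 2 v
    · exact hmajA 3 v
    · exact hmajB 3 v
  have hpair : ∀ j k : Fin (2*4), star (E x) ⬝ᵥ ((c j * c k) *ᵥ E x)
      = star t * t * (star (majC (topC r) j) ⬝ᵥ majC (topC r) k) := by
    intro j k
    have hh : (c j)ᴴ = c j := hc.1 j
    rw [← mulVec_mulVec, dotProduct_mulVec]
    nth_rewrite 1 [← hh]
    rw [← star_mulVec, hsol, map_smul, mulVec_smul, mulVec_smul, hmaj, hmaj, star_smul,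
      smul_dotProduct, dotProduct_smul, hinner, smul_eq_mul, smul_eq_mul, mul_assoc]
  have hcov : Γ = covT r := by
    ext j k
    have h := hΓ j k
    rw [sub_mulVec, dotProduct_sub, hpair, hpair] at h
    have h2 := cov_entries (r : ℂ) hrC hrs j k
    have h3 : ((Γ j k : ℝ) : ℂ) = covT (r : ℂ) j k := by
      linear_combination h + star t * t * h2 + covT (r : ℂ) j k * hnorm
    have h4 : covT (r : ℂ) j k = ((covT r j k : ℝ) : ℂ) := by
      fin_cases j <;> fin_cases k <;> simp [covT]
    rw [h4] at h3
    exact_mod_cast h3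
  have hGG : Γ * Γᵀ = ((5 + 2 * r) / 9) • 1 := by
    rw [hcov]
    exact covT_mul r hr
  refine ⟨hGG, not_gaussian hc (E x) hψ Γ hΓ _ ?_ hGG⟩
  have hr2 : r < 2 := by nlinarith [Real.sqrt_nonneg 3]
  linarith

end
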